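/- arXiv:1702.03921 — 2 statements merged into one kernel-verified Lean document; each statement's English description precedes it below -/
import Mathlib

section
/- For every width D > 0 and all positive integers j ≠ q, the integral over ρ from -D/2 to D/2 of (2ρ + D)·y_j(ρ)·y_q'(ρ) dρ equals -4jq·(-1)^{j+q}/(j^2 − q^2), where y_q' denotes the derivative of y_q with respect to ρ. -/
/-- The Dirichlet eigenfunction `y_j(ρ) = sqrt(2/D) sin( ((2ρ+D)/2) · (πj/D) )`
of a waveguide of width `D`. -/
noncomputable def waveguideEigenfunction (D : ℝ) (j : ℕ) (ρ : ℝ) : ℝ :=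
  Real.sqrt (2 / D) * Real.sin ((2 * ρ + D) / 2 * (Real.pi * j / D))

/-!
After the substitution `ρ = x - D / 2` the waveguide becomes `[0, D]`, the eigenfunctions become
pure sines, and the weight `2 * ρ + D` becomes `2 * x`. Writing `sin * cos` as a sum of two sines
leaves the integrals of `x * sin (π k x / D)` for `k = j - q` and `k = j + q`. Each is a boundary
term `-(-1) ^ k * D ^ 2 / (π * k)`; the two signs agree, and the sum `1 / (j - q) + 1 / (j + q)`
produces the factor `2 * j / (j ^ 2 - q ^ 2)`.
-/

open Real

theorem integral_mul_sin_const_mul {c : ℝ} (hc : c ≠ 0) (a b : ℝ) :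
    ∫ x in a..b, x * sin (c * x) =
      (sin (c * b) - sin (c * a)) / c ^ 2 - (b * cos (c * b) - a * cos (c * a)) / c := by
  have hasDerivAt_primitive (x : ℝ) :
      HasDerivAt (fun x ↦ -(cos (c * x) / c)) (sin (c * x)) x := by
    refine ((hasDerivAt_const_mul c).cos.div_const c).neg.congr_deriv ?_
    field_simp
  have by_parts := intervalIntegral.integral_mul_deriv_eq_deriv_mul
    (fun x _ ↦ hasDerivAt_id x) (fun x _ ↦ hasDerivAt_primitive x)
    (Continuous.intervalIntegrable (by fun_prop) a b)
    (Continuous.intervalIntegrable (by fun_prop) a b)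
  simp only [id, one_mul, intervalIntegral.integral_neg, intervalIntegral.integral_div,
    intervalIntegral.integral_comp_mul_left _ hc, integral_cos, smul_eq_mul] at by_parts
  rw [by_parts]
  field_simp
  ring

theorem integral_mul_sin_int_mul_pi_div {L : ℝ} (hL : L ≠ 0) {k : ℤ} (hk : k ≠ 0) :
    ∫ x in 0..L, x * sin (π * k / L * x) = -((-1) ^ k * L ^ 2 / (π * k)) := by
  have hk' : (k : ℝ) ≠ 0 := mod_cast hk
  have hfreq : π * k / L ≠ 0 := by positivity
  have hphase : π * k / L * L = k * π := by field_simp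
  rw [integral_mul_sin_const_mul hfreq, hphase, sin_int_mul_pi, cos_int_mul_pi]
  simp only [mul_zero, sin_zero, sub_self, zero_div, cos_zero, mul_one, sub_zero, zero_sub, neg_inj]
  field_simp

theorem integral_mul_sin_mul_cos (a b u v : ℝ) :
    ∫ x in u..v, x * (sin (a * x) * cos (b * x)) =
      ((∫ x in u..v, x * sin ((a - b) * x)) + ∫ x in u..v, x * sin ((a + b) * x)) / 2 := by
  rw [← intervalIntegral.integral_add (Continuous.intervalIntegrable (by fun_prop) u v)
    (Continuous.intervalIntegrable (by fun_prop) u v), ← intervalIntegral.integral_div]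
  refine intervalIntegral.integral_congr fun x _ ↦ ?_
  simp only [sub_mul, add_mul]
  linear_combination x / 2 * two_mul_sin_mul_cos (a * x) (b * x)

theorem integral_mul_sin_mul_cos_int_mul_pi_div {L : ℝ} (hL : L ≠ 0) {j q : ℤ}
    (hsub : j - q ≠ 0) (hadd : j + q ≠ 0) :
    ∫ x in 0..L, x * (sin (π * j / L * x) * cos (π * q / L * x)) =
      -((-1) ^ (j + q) * L ^ 2 * j / (π * (j ^ 2 - q ^ 2))) := by
  have hsub' : (j - q : ℝ) ≠ 0 := mod_cast hsub
  have hadd' : (j + q : ℝ) ≠ 0 := mod_cast hadd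
  have hsign : (-1 : ℝ) ^ (j - q) = (-1) ^ (j + q) := by
    simp [zpow_sub₀, zpow_add₀, div_eq_mul_inv, ← inv_zpow]
  have hfreq_sub : π * j / L - π * q / L = π * (j - q : ℤ) / L := by push_cast; ring
  have hfreq_add : π * j / L + π * q / L = π * (j + q : ℤ) / L := by push_cast; ring
  rw [integral_mul_sin_mul_cos, hfreq_sub, hfreq_add, integral_mul_sin_int_mul_pi_div hL hsub,
    integral_mul_sin_int_mul_pi_div hL hadd, hsign, sq_sub_sq]
  push_cast
  field_simp
  ring

theorem integral_neg_half_half {E : Type*} [NormedAddCommGroup E] [NormedSpace ℝ E]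
    (f : ℝ → E) (D : ℝ) :
    ∫ ρ in (-D / 2)..(D / 2), f ρ = ∫ x in 0..D, f (x - D / 2) := by
  rw [intervalIntegral.integral_comp_sub_right, zero_sub, sub_half, neg_div]

theorem waveguideEigenfunction_sub_half (D : ℝ) (j : ℕ) (x : ℝ) :
    waveguideEigenfunction D j (x - D / 2) = √(2 / D) * sin (π * j / D * x) := by
  rw [waveguideEigenfunction]
  ring_nf

theorem deriv_waveguideEigenfunction_sub_half (D : ℝ) (j : ℕ) (x : ℝ) :
    deriv (waveguideEigenfunction D j) (x - D / 2) =
      √(2 / D) * (π * j / D * cos (π * j / D * x)) := by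
  rw [← deriv_comp_sub_const]
  simp only [waveguideEigenfunction_sub_half]
  rw [((hasDerivAt_const_mul (π * j / D)).sin.const_mul √(2 / D)).deriv, mul_comm (cos _)]

/-- `∫_{-D/2}^{D/2} (2ρ + D) y_j(ρ) y_q'(ρ) dρ = -4jq(-1)^{j+q}/(j² − q²)` for `j ≠ q`. -/
theorem integral_weighted_mul_deriv_other (D : ℝ) (hD : 0 < D)
    (j q : ℕ) (hj : 0 < j) (hq : 0 < q) (hjq : j ≠ q) :
    ∫ ρ in (-D / 2)..(D / 2),
        (2 * ρ + D) * waveguideEigenfunction D j ρ *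
          deriv (waveguideEigenfunction D q) ρ
      = -(4 * (j : ℝ) * (q : ℝ) * (-1 : ℝ) ^ (j + q)) / ((j : ℝ) ^ 2 - (q : ℝ) ^ 2) := by
  have hintegrand (x : ℝ) :
      (2 * (x - D / 2) + D) * waveguideEigenfunction D j (x - D / 2) *
          deriv (waveguideEigenfunction D q) (x - D / 2) =
        4 * π * q / D ^ 2 * (x * (sin (π * j / D * x) * cos (π * q / D * x))) := by
    rw [waveguideEigenfunction_sub_half, deriv_waveguideEigenfunction_sub_half]
    linear_combination 2 * x * (π * q / D) * sin (π * j / D * x) * cos (π * q / D * x) *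
      sq_sqrt (show 0 ≤ 2 / D by positivity)
  have hcoeff : ∫ x in 0..D, x * (sin (π * j / D * x) * cos (π * q / D * x)) =
      -((-1) ^ (j + q) * D ^ 2 * j / (π * (j ^ 2 - q ^ 2))) :=
    mod_cast integral_mul_sin_mul_cos_int_mul_pi_div hD.ne' (j := j) (q := q) (by lia) (by lia)
  rw [integral_neg_half_half]
  simp only [hintegrand, intervalIntegral.integral_const_mul, hcoeff]
  field_simp
end

section
/- Let D: ℝ → ℝ be differentiable with D(z) > 0 for all z, and let j ≠ q be positive integers. Then for every z, the integral over ρ from -D(z)/2 to D(z)/2 of y_j(ρ,z)·∂_z y_q(ρ,z) dρ equals (D'(z)/D(z))·jq·((-1)^{j+q} + 1)/(j^2 − q^2). -/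
/-- The `z`-dependent Dirichlet eigenfunction
`y_j(ρ,z) = sqrt(2/D(z)) sin( ((2ρ+D(z))/2) · (πj/D(z)) )`
of a waveguide of slowly varying width `D(z)`. -/
noncomputable def waveguideEigenfunctionZ (D : ℝ → ℝ) (j : ℕ) (ρ z : ℝ) : ℝ :=
  Real.sqrt (2 / D z) * Real.sin ((2 * ρ + D z) / 2 * (Real.pi * j / D z))

/-!
The width `D` acts on `y_q` by a unitary dilation, so `∂_z y_q = -(D'/D) (y_q / 2 + ρ ∂_ρ y_q)`.
The first term is orthogonal to `y_j`. For the second, when `u'' = -κ u` and `v'' = -μ v`,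
`(κ - μ) x u v' = (u v' - x (u' v' + μ u v))' + 2 μ u v`,
so under Dirichlet conditions the first moment of `u v'` is the boundary value of `-x u' v'`
divided by `κ - μ`.
-/

open Real Set MeasureTheory

/-- `u` solves the Helmholtz equation `u'' + κ u = 0` on `s`, with first derivative `u'`. The
derivative is carried along as data because Green-type identities evaluate it at end points. -/
structure IsHelmholtzSolutionOn (κ : ℝ) (u u' : ℝ → ℝ) (s : Set ℝ) : Prop where
  hasDerivAt : ∀ x ∈ s, HasDerivAt u (u' x) x
  hasDerivAt_deriv : ∀ x ∈ s, HasDerivAt u' (-(κ * u x)) x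

namespace IsHelmholtzSolutionOn

variable {κ μ a b : ℝ} {u u' v v' : ℝ → ℝ} {s : Set ℝ}

theorem continuousOn (hu : IsHelmholtzSolutionOn κ u u' s) : ContinuousOn u s :=
  fun x hx => (hu.hasDerivAt x hx).continuousAt.continuousWithinAt

theorem continuousOn_deriv (hu : IsHelmholtzSolutionOn κ u u' s) : ContinuousOn u' s :=
  fun x hx => (hu.hasDerivAt_deriv x hx).continuousAt.continuousWithinAt

theorem intervalIntegrable_mul (hu : IsHelmholtzSolutionOn κ u u' (uIcc a b))
    (hv : IsHelmholtzSolutionOn μ v v' (uIcc a b)) :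
    IntervalIntegrable (fun x => u x * v x) volume a b :=
  (hu.continuousOn.mul hv.continuousOn).intervalIntegrable

theorem intervalIntegrable_id_mul_mul_deriv (hu : IsHelmholtzSolutionOn κ u u' (uIcc a b))
    (hv : IsHelmholtzSolutionOn μ v v' (uIcc a b)) :
    IntervalIntegrable (fun x => x * (u x * v' x)) volume a b :=
  (continuousOn_id.mul (hu.continuousOn.mul hv.continuousOn_deriv)).intervalIntegrable

theorem sub_mul_integral_mul (hu : IsHelmholtzSolutionOn κ u u' (uIcc a b))
    (hv : IsHelmholtzSolutionOn μ v v' (uIcc a b)) :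
    (κ - μ) * ∫ x in a..b, u x * v x =
      (u b * v' b - u' b * v b) - (u a * v' a - u' a * v a) := by
  have hasDerivAt_wronskian : ∀ x ∈ uIcc a b,
      HasDerivAt (fun x => u x * v' x - u' x * v x) ((κ - μ) * (u x * v x)) x := by
    intro x hx
    refine (((hu.hasDerivAt x hx).mul (hv.hasDerivAt_deriv x hx)).sub
      ((hu.hasDerivAt_deriv x hx).mul (hv.hasDerivAt x hx))).congr_deriv ?_
    ring
  rw [← intervalIntegral.integral_const_mul]
  exact intervalIntegral.integral_eq_sub_of_hasDerivAt hasDerivAt_wronskian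
    ((hu.intervalIntegrable_mul hv).const_mul _)

theorem sub_mul_integral_id_mul_mul_deriv (hu : IsHelmholtzSolutionOn κ u u' (uIcc a b))
    (hv : IsHelmholtzSolutionOn μ v v' (uIcc a b)) :
    (κ - μ) * ∫ x in a..b, x * (u x * v' x) =
      (u b * v' b - b * (u' b * v' b + μ * (u b * v b))) -
        (u a * v' a - a * (u' a * v' a + μ * (u a * v a))) +
      2 * μ * ∫ x in a..b, u x * v x := by
  have hasDerivAt_virial : ∀ x ∈ uIcc a b,
      HasDerivAt (fun x => u x * v' x - x * (u' x * v' x + μ * (u x * v x)))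
        ((κ - μ) * (x * (u x * v' x)) - 2 * μ * (u x * v x)) x := by
    intro x hx
    have hu₁ := hu.hasDerivAt x hx
    have hu₂ := hu.hasDerivAt_deriv x hx
    have hv₁ := hv.hasDerivAt x hx
    have hv₂ := hv.hasDerivAt_deriv x hx
    refine ((hu₁.mul hv₂).sub ((hasDerivAt_id' x).mul
      ((hu₂.mul hv₂).add ((hu₁.mul hv₁).const_mul μ)))).congr_deriv ?_
    simp only [Pi.add_apply, Pi.mul_apply]
    ring
  have integrable_moment := (hu.intervalIntegrable_id_mul_mul_deriv hv).const_mul (κ - μ)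
  have integrable_product := (hu.intervalIntegrable_mul hv).const_mul (2 * μ)
  rw [← intervalIntegral.integral_eq_sub_of_hasDerivAt hasDerivAt_virial
      (integrable_moment.sub integrable_product),
    intervalIntegral.integral_sub integrable_moment integrable_product,
    intervalIntegral.integral_const_mul, intervalIntegral.integral_const_mul, sub_add_cancel]

end IsHelmholtzSolutionOn

theorem hasDerivAt_sqrt_div {D : ℝ → ℝ} {D' c z : ℝ} (hD : HasDerivAt D D' z)
    (hc : 0 < c / D z) :
    HasDerivAt (fun w => √(c / D w)) (-(D' / D z) * (√(c / D z) / 2)) z := by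
  have hDz : D z ≠ 0 := (div_ne_zero_iff.mp hc.ne').2
  refine (((hasDerivAt_const z c).fun_div hD hDz).sqrt hc.ne').congr_deriv ?_
  rw [div_eq_iff (by positivity)]
  linear_combination (D' / D z) * Real.sq_sqrt hc.le

theorem hasDerivAt_sqrt_div_mul_comp_div {D f : ℝ → ℝ} {D' f' c x z : ℝ}
    (hD : HasDerivAt D D' z) (hc : 0 < c / D z) (hf : HasDerivAt f f' (x / D z)) :
    HasDerivAt (fun w => √(c / D w) * f (x / D w))
      (-(D' / D z) * (√(c / D z) * f (x / D z) / 2 + x * (√(c / D z) * (f' / D z)))) z := by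
  have hDz : D z ≠ 0 := (div_ne_zero_iff.mp hc.ne').2
  refine ((hasDerivAt_sqrt_div hD hc).mul
    (hf.comp z ((hasDerivAt_const z x).fun_div hD hDz))).congr_deriv ?_
  simp only [Function.comp_apply]
  ring

section WaveguideEigenfunction

variable {D : ℝ → ℝ} {D' z : ℝ} {j q : ℕ}

/-- The transversal derivative `∂_ρ y_j(ρ,z)` of `waveguideEigenfunctionZ`, in closed form. -/
noncomputable def waveguideEigenfunctionRhoDeriv (D : ℝ → ℝ) (j : ℕ) (ρ z : ℝ) : ℝ :=
  √(2 / D z) * (π * j / D z * cos ((2 * ρ + D z) / 2 * (π * j / D z)))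

theorem isHelmholtzSolutionOn_waveguideEigenfunctionZ (D : ℝ → ℝ) (j : ℕ) (z : ℝ) (s : Set ℝ) :
    IsHelmholtzSolutionOn ((π * j / D z) ^ 2) (fun ρ => waveguideEigenfunctionZ D j ρ z)
      (fun ρ => waveguideEigenfunctionRhoDeriv D j ρ z) s := by
  have hasDerivAt_phase (ρ : ℝ) :
      HasDerivAt (fun ρ => (2 * ρ + D z) / 2 * (π * j / D z)) (π * j / D z) ρ := by
    refine (((((hasDerivAt_id' ρ).const_mul 2).add_const (D z)).div_const 2).mul_const
      (π * j / D z)).congr_deriv ?_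
    ring
  constructor <;> intro ρ _
  · refine ((hasDerivAt_phase ρ).sin.const_mul √(2 / D z)).congr_deriv ?_
    rw [waveguideEigenfunctionRhoDeriv]
    ring
  · refine (((hasDerivAt_phase ρ).cos.const_mul (π * j / D z)).const_mul
      √(2 / D z)).congr_deriv ?_
    rw [waveguideEigenfunctionZ]
    ring

theorem waveguide_phase_eq_mul_div_add_half (hDz : D z ≠ 0) (q : ℕ) (ρ : ℝ) :
    (2 * ρ + D z) / 2 * (π * q / D z) = π * q * (ρ / D z + 1 / 2) := by
  field_simp

theorem waveguideEigenfunctionZ_eq_sqrt_mul_sin_div (D : ℝ → ℝ) (q : ℕ) (ρ z : ℝ) :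
    waveguideEigenfunctionZ D q ρ z = √(2 / D z) * sin (π * q * (ρ / D z + 1 / 2)) := by
  rcases eq_or_ne (D z) 0 with hDz | hDz
  · simp [waveguideEigenfunctionZ, hDz]
  · rw [waveguideEigenfunctionZ, waveguide_phase_eq_mul_div_add_half hDz]

theorem hasDerivAt_waveguideEigenfunctionZ (hD : HasDerivAt D D' z) (hDz : 0 < D z) (q : ℕ)
    (ρ : ℝ) :
    HasDerivAt (fun w => waveguideEigenfunctionZ D q ρ w)
      (-(D' / D z) * (waveguideEigenfunctionZ D q ρ z / 2 +
        ρ * waveguideEigenfunctionRhoDeriv D q ρ z)) z := by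
  have hasDerivAt_profile (x : ℝ) :
      HasDerivAt (fun x => sin (π * q * (x + 1 / 2))) (π * q * cos (π * q * (x + 1 / 2))) x := by
    refine (((hasDerivAt_id' x).add_const (1 / 2)).const_mul (π * q)).sin.congr_deriv ?_
    ring
  simp only [waveguideEigenfunctionZ_eq_sqrt_mul_sin_div]
  refine (hasDerivAt_sqrt_div_mul_comp_div hD (div_pos two_pos hDz)
    (hasDerivAt_profile (ρ / D z))).congr_deriv ?_
  rw [waveguideEigenfunctionRhoDeriv, waveguide_phase_eq_mul_div_add_half hDz.ne']
  ring

theorem waveguide_phase_left (d k : ℝ) : (2 * (-d / 2) + d) / 2 * k = 0 := by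
  ring

theorem waveguide_phase_right (hDz : D z ≠ 0) (j : ℕ) :
    (2 * (D z / 2) + D z) / 2 * (π * j / D z) = j * π := by
  field_simp
  ring

theorem waveguideEigenfunctionZ_left (D : ℝ → ℝ) (j : ℕ) (z : ℝ) :
    waveguideEigenfunctionZ D j (-D z / 2) z = 0 := by
  rw [waveguideEigenfunctionZ, waveguide_phase_left, sin_zero, mul_zero]

theorem waveguideEigenfunctionZ_right (hDz : D z ≠ 0) (j : ℕ) :
    waveguideEigenfunctionZ D j (D z / 2) z = 0 := by
  rw [waveguideEigenfunctionZ, waveguide_phase_right hDz, sin_nat_mul_pi, mul_zero]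

theorem waveguideEigenfunctionRhoDeriv_left (D : ℝ → ℝ) (j : ℕ) (z : ℝ) :
    waveguideEigenfunctionRhoDeriv D j (-D z / 2) z = √(2 / D z) * (π * j / D z) := by
  rw [waveguideEigenfunctionRhoDeriv, waveguide_phase_left, cos_zero, mul_one]

theorem waveguideEigenfunctionRhoDeriv_right (hDz : D z ≠ 0) (j : ℕ) :
    waveguideEigenfunctionRhoDeriv D j (D z / 2) z =
      √(2 / D z) * (π * j / D z * (-1) ^ j) := by
  rw [waveguideEigenfunctionRhoDeriv, waveguide_phase_right hDz, cos_nat_mul_pi]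

theorem cast_sq_sub_cast_sq_ne_zero (hjq : j ≠ q) : (j : ℝ) ^ 2 - (q : ℝ) ^ 2 ≠ 0 := by
  rw [sub_ne_zero, Ne, sq_eq_sq₀ j.cast_nonneg q.cast_nonneg, Nat.cast_inj]
  exact hjq

theorem sq_pi_mul_div_sub_ne_zero (hDz : D z ≠ 0) (hjq : j ≠ q) :
    (π * j / D z) ^ 2 - (π * q / D z) ^ 2 ≠ 0 := by
  have factored : (π * j / D z) ^ 2 - (π * q / D z) ^ 2 =
      (π / D z) ^ 2 * ((j : ℝ) ^ 2 - (q : ℝ) ^ 2) := by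
    ring
  rw [factored]
  exact mul_ne_zero (pow_ne_zero 2 (div_ne_zero pi_ne_zero hDz)) (cast_sq_sub_cast_sq_ne_zero hjq)

theorem integral_waveguideEigenfunctionZ_mul (hDz : D z ≠ 0) (hjq : j ≠ q) :
    ∫ ρ in (-D z / 2)..(D z / 2),
      waveguideEigenfunctionZ D j ρ z * waveguideEigenfunctionZ D q ρ z = 0 := by
  have green := (isHelmholtzSolutionOn_waveguideEigenfunctionZ D j z
    (uIcc (-D z / 2) (D z / 2))).sub_mul_integral_mul
      (isHelmholtzSolutionOn_waveguideEigenfunctionZ D q z _)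
  simp only [waveguideEigenfunctionZ_left, waveguideEigenfunctionZ_right hDz, zero_mul, mul_zero,
    sub_zero] at green
  exact (mul_eq_zero.mp green).resolve_left (sq_pi_mul_div_sub_ne_zero hDz hjq)

theorem integral_id_mul_waveguideEigenfunctionZ_mul_rhoDeriv (hDz : 0 < D z) (hjq : j ≠ q) :
    ∫ ρ in (-D z / 2)..(D z / 2),
        ρ * (waveguideEigenfunctionZ D j ρ z * waveguideEigenfunctionRhoDeriv D q ρ z) =
      -((j : ℝ) * q * ((-1) ^ (j + q) + 1) / ((j : ℝ) ^ 2 - (q : ℝ) ^ 2)) := by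
  have virial := (isHelmholtzSolutionOn_waveguideEigenfunctionZ D j z
    (uIcc (-D z / 2) (D z / 2))).sub_mul_integral_id_mul_mul_deriv
      (isHelmholtzSolutionOn_waveguideEigenfunctionZ D q z _)
  simp only [integral_waveguideEigenfunctionZ_mul hDz.ne' hjq, waveguideEigenfunctionZ_left,
    waveguideEigenfunctionZ_right hDz.ne', waveguideEigenfunctionRhoDeriv_left,
    waveguideEigenfunctionRhoDeriv_right hDz.ne', zero_mul, mul_zero, add_zero, zero_sub]
    at virial
  refine mul_left_cancel₀ (sq_pi_mul_div_sub_ne_zero hDz.ne' hjq) (virial.trans ?_)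
  have amplitude_sq : √(2 / D z) ^ 2 = 2 / D z := Real.sq_sqrt (div_pos two_pos hDz).le
  have hsq := cast_sq_sub_cast_sq_ne_zero hjq
  calc
    _ = -(D z / 2 * √(2 / D z) ^ 2 * (π / D z) ^ 2 * (j * q * ((-1) ^ (j + q) + 1))) := by ring
    _ = _ := by
      rw [amplitude_sq]
      field_simp

theorem integral_mul_partialZ_other_general (hD : HasDerivAt D D' z) (hDz : 0 < D z)
    (hjq : j ≠ q) :
    ∫ ρ in (-(D z) / 2)..(D z / 2),
        waveguideEigenfunctionZ D j ρ z * deriv (fun w => waveguideEigenfunctionZ D q ρ w) z =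
      D' / D z * ((j : ℝ) * q * ((-1) ^ (j + q) + 1) / ((j : ℝ) ^ 2 - (q : ℝ) ^ 2)) := by
  have hy (n : ℕ) := isHelmholtzSolutionOn_waveguideEigenfunctionZ D n z
    (uIcc (-D z / 2) (D z / 2))
  have integrand_eq (ρ : ℝ) :
      waveguideEigenfunctionZ D j ρ z * deriv (fun w => waveguideEigenfunctionZ D q ρ w) z =
        -(D' / D z) * (1 / 2 * (waveguideEigenfunctionZ D j ρ z * waveguideEigenfunctionZ D q ρ z) +
          ρ * (waveguideEigenfunctionZ D j ρ z * waveguideEigenfunctionRhoDeriv D q ρ z)) := by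
    rw [(hasDerivAt_waveguideEigenfunctionZ hD hDz q ρ).deriv]
    ring
  simp only [integrand_eq]
  rw [intervalIntegral.integral_const_mul,
    intervalIntegral.integral_add (((hy j).intervalIntegrable_mul (hy q)).const_mul _)
      ((hy j).intervalIntegrable_id_mul_mul_deriv (hy q)),
    intervalIntegral.integral_const_mul, integral_waveguideEigenfunctionZ_mul hDz.ne' hjq,
    integral_id_mul_waveguideEigenfunctionZ_mul_rhoDeriv hDz hjq, mul_zero, zero_add, neg_mul_neg]

end WaveguideEigenfunction

/-- `∫_{-D(z)/2}^{D(z)/2} y_j(ρ,z) ∂_z y_q(ρ,z) dρ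
    = (D'(z)/D(z)) jq((-1)^{j+q} + 1)/(j² − q²)` for `j ≠ q`. -/
theorem integral_mul_partialZ_other (D : ℝ → ℝ) (hD : Differentiable ℝ D)
    (hDpos : ∀ z, 0 < D z) (j q : ℕ) (hj : 0 < j) (hq : 0 < q) (hjq : j ≠ q) (z : ℝ) :
    ∫ ρ in (-(D z) / 2)..(D z / 2),
        waveguideEigenfunctionZ D j ρ z *
          deriv (fun w => waveguideEigenfunctionZ D q ρ w) z
      = deriv D z / D z *
          ((j : ℝ) * (q : ℝ) * ((-1 : ℝ) ^ (j + q) + 1) / ((j : ℝ) ^ 2 - (q : ℝ) ^ 2)) := by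
  exact integral_mul_partialZ_other_general (hD z).hasDerivAt (hDpos z) hjq
end
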